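/- arXiv:math/9810161 — 2 statements merged into one kernel-verified Lean document; each statement's English description precedes it below -/
import Mathlib

section
/- Equivalence of the two forms of the GL_h(2)-covariant h-bosonic algebra: let Ã₁ := A₂ and Ã₂ := −A₁ + h A₂ (i.e. Ã = A·C with C = [[0, −1], [1, h]]). Then A⁺₁, A⁺₂, A₁, A₂ satisfy [A⁺₁, A⁺₂] = h (A⁺₁)², [A₁, A₂] = h A₂², [A₂, A⁺₁] = 0, [A₁, A⁺₂] = h(−A⁺₁A₁ − A⁺₂A₂ + h A⁺₁A₂), [A₁, A⁺₁] = [A₂, A⁺₂] = 1 + h A⁺₁A₂, if and only if A⁺₁, A⁺₂, Ã₁, Ã₂ satisfy [A⁺₁, A⁺₂] = h (A⁺₁)², [Ã₁, Ã₂] = h Ã₁², [Ã₁, A⁺₁] = 0, [Ã₂, A⁺₂] = h(1 − A⁺₁Ã₂ + A⁺₂Ã₁ + h A⁺₁Ã₁), and [Ã₁, A⁺₂] = −[Ã₂, A⁺₁] = 1 + h A⁺₁Ã₁. -/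
/-- Equivalence of the two forms of the GL_h(2)-covariant h-bosonic algebra.  With
`Ã₁ := A₂` and `Ã₂ := −A₁ + h A₂` (i.e. `Ã = A·C` with `C = [[0,−1],[1,h]]`),
the relations
`[A⁺₁,A⁺₂] = h (A⁺₁)²`, `[A₁,A₂] = h A₂²`, `[A₂,A⁺₁] = 0`,
`[A₁,A⁺₂] = h(−A⁺₁A₁ − A⁺₂A₂ + h A⁺₁A₂)`, `[A₁,A⁺₁] = [A₂,A⁺₂] = 1 + h A⁺₁A₂`
hold if and only if
`[A⁺₁,A⁺₂] = h (A⁺₁)²`, `[Ã₁,Ã₂] = h Ã₁²`, `[Ã₁,A⁺₁] = 0`,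
`[Ã₂,A⁺₂] = h(1 − A⁺₁Ã₂ + A⁺₂Ã₁ + h A⁺₁Ã₁)`,
`[Ã₁,A⁺₂] = −[Ã₂,A⁺₁] = 1 + h A⁺₁Ã₁` hold. -/
theorem h_bosonic_two_forms_equiv (k : Type*) [CommRing k]
    (𝒜 : Type*) [Ring 𝒜] [Algebra k 𝒜] (h : k) (Ap1 Ap2 A1 A2 : 𝒜) :
    (Ap1 * Ap2 - Ap2 * Ap1 = h • (Ap1 * Ap1) ∧
     A1 * A2 - A2 * A1 = h • (A2 * A2) ∧
     A2 * Ap1 - Ap1 * A2 = 0 ∧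
     A1 * Ap2 - Ap2 * A1 = h • (-(Ap1 * A1) - Ap2 * A2 + h • (Ap1 * A2)) ∧
     A1 * Ap1 - Ap1 * A1 = 1 + h • (Ap1 * A2) ∧
     A2 * Ap2 - Ap2 * A2 = 1 + h • (Ap1 * A2))
    ↔
    (let At1 := A2
     let At2 := -A1 + h • A2
     Ap1 * Ap2 - Ap2 * Ap1 = h • (Ap1 * Ap1) ∧
     At1 * At2 - At2 * At1 = h • (At1 * At1) ∧
     At1 * Ap1 - Ap1 * At1 = 0 ∧
     At2 * Ap2 - Ap2 * At2 = h • (1 - Ap1 * At2 + Ap2 * At1 + h • (Ap1 * At1)) ∧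
     At1 * Ap2 - Ap2 * At1 = 1 + h • (Ap1 * At1) ∧
     -(At2 * Ap1 - Ap1 * At2) = 1 + h • (Ap1 * At1)) := by
  simp only [mul_add, add_mul, mul_neg, neg_mul, mul_smul_comm, smul_mul_assoc]
  constructor
  · rintro ⟨h1, h2, h3, h4, h5, h6⟩
    refine ⟨h1, ?_, h3, ?_, h6, ?_⟩
    · linear_combination (norm := module) h2
    · linear_combination (norm := module) h • h6 - h4
    · linear_combination (norm := module) h5 - h • h3
  · rintro ⟨h1, h2, h3, h4, h5, h6⟩
    refine ⟨h1, ?_, h3, ?_, ?_, h5⟩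
    · linear_combination (norm := module) h2
    · linear_combination (norm := module) h • h5 - h4
    · linear_combination (norm := module) h6 + h • h3
end

section
/- Aizawa's bosonic realization satisfies the GL_h(2)-covariant h-bosonic algebra: the linear endomorphisms A⁺₁ = B ∘ a⁺₁, A⁺₂ = K ∘ a⁺₂ + (h/2)(A⁺₁ − 2 a⁺₁ ∘ J₀), Ã₁ = B ∘ a₂, Ã₂ = −K ∘ a₁ + (h/2)(Ã₁ − 2 a₂ ∘ J₀) of ℝ[X₁, X₂] satisfy [A⁺₁, A⁺₂] = h (A⁺₁)², [Ã₁, Ã₂] = h Ã₁², [Ã₁, A⁺₁] = 0, [Ã₂, A⁺₂] = h(1 − A⁺₁Ã₂ + A⁺₂Ã₁ + h A⁺₁Ã₁), and [Ã₁, A⁺₂] = −[Ã₂, A⁺₁] = 1 + h A⁺₁Ã₁, where 1 denotes the identity endomorphism. -/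
/-- The creation operator `a⁺_i`: multiplication by `X_i` on `ℝ[X₁,X₂]`. -/
noncomputable def aplus (i : Fin 2) : Module.End ℝ (MvPolynomial (Fin 2) ℝ) :=
  LinearMap.mulLeft ℝ (MvPolynomial.X i)

/-- The annihilation operator `a_i`: the partial derivative `∂/∂X_i` on `ℝ[X₁,X₂]`. -/
noncomputable def aop (i : Fin 2) : Module.End ℝ (MvPolynomial (Fin 2) ℝ) :=
  (MvPolynomial.pderiv i).toLinearMap

/-- `J₊ = a⁺₁ ∘ a₂` (0-based indices). -/
noncomputable def Jplus : Module.End ℝ (MvPolynomial (Fin 2) ℝ) :=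
  aplus 0 * aop 1

/-- `J₀ = (1/2)(a⁺₁ ∘ a₁ − a⁺₂ ∘ a₂)` (0-based indices). -/
noncomputable def Jzero : Module.End ℝ (MvPolynomial (Fin 2) ℝ) :=
  (1 / 2 : ℝ) • (aplus 0 * aop 0 - aplus 1 * aop 1)

/-- `K = 1 − (h/2) J₊`. -/
noncomputable def K (h : ℝ) : Module.End ℝ (MvPolynomial (Fin 2) ℝ) :=
  1 - (h / 2) • Jplus

theorem hb_ext {R : Type*} [Ring R] {a b r : R} (h : a * b = r) (z : R) :
    a * (b * z) = r * z := by rw [← mul_assoc, h]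

theorem hb_abs {R : Type*} [Ring R] [Algebra ℝ R] (c : ℝ) (x y p q B : R)
    (qx : q * x = x * q) (yx : y * x = x * y) (yq : y * q = q * y - 1)
    (pq : p * q = q * p) (px : p * x = x * p + 1) (py : p * y = y * p)
    (hBK : B * (1 - c • (x * q)) = 1) (hKB : (1 - c • (x * q)) * B = 1) :
    let Ap1 := B * x
    let Ap2 := (1 - c • (x * q)) * y +
      c • (Ap1 - (2 : ℝ) • (x * ((1 / 2 : ℝ) • (x * p - y * q))))
    let At1 := B * q
    let At2 := -((1 - c • (x * q)) * p) +
      c • (At1 - (2 : ℝ) • (q * ((1 / 2 : ℝ) • (x * p - y * q))))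
    Ap1 * Ap2 - Ap2 * Ap1 = (2 * c) • (Ap1 * Ap1) ∧
    At1 * At2 - At2 * At1 = (2 * c) • (At1 * At1) ∧
    At1 * Ap1 - Ap1 * At1 = 0 ∧
    At2 * Ap2 - Ap2 * At2 =
      (2 * c) • (1 - Ap1 * At2 + Ap2 * At1 + (2 * c) • (Ap1 * At1)) ∧
    At1 * Ap2 - Ap2 * At1 = 1 + (2 * c) • (Ap1 * At1) ∧
    -(At2 * Ap1 - Ap1 * At2) = 1 + (2 * c) • (Ap1 * At1) := by
  have comm : ∀ z w : R, z * (1 - c • (x * q)) = (1 - c • (x * q)) * z + w →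
      B * z = z * B + B * w * B := by
    intro z w hz
    have h1 : B * (z * (1 - c • (x * q))) * B = B * ((1 - c • (x * q)) * z + w) * B := by rw [hz]
    have h2 : B * (z * (1 - c • (x * q))) * B = B * z * ((1 - c • (x * q)) * B) := by
      simp only [mul_assoc]
    have h3 : B * ((1 - c • (x * q)) * z + w) * B
        = (B * (1 - c • (x * q))) * z * B + B * w * B := by
      simp only [mul_assoc, mul_add, add_mul]
    rw [h2, h3, hBK, hKB] at h1
    simpa using h1
  have Bx : B * x = x * B := by
    have := comm x 0 (by
      simp only [mul_sub, sub_mul, mul_smul_comm, smul_mul_assoc, mul_assoc, qx]; simp)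
    simpa using this
  have qB : q * B = B * q := by
    have := comm q 0 (by
      simp only [mul_sub, sub_mul, mul_smul_comm, smul_mul_assoc, mul_assoc, hb_ext qx]; simp)
    simpa using this.symm
  have yB : y * B = B * y - c • (x * (B * B)) := by
    have := comm y (c • x) (by
      simp only [mul_sub, sub_mul, mul_smul_comm, smul_mul_assoc, mul_assoc, hb_ext yx, yq]
      simp only [mul_sub, mul_one, one_mul]; module)
    rw [this, mul_smul_comm, Bx]
    simp [mul_assoc]
  have pB : p * B = B * p + c • (B * (B * q)) := by
    have := comm p (-(c • q)) (by
      simp only [mul_sub, sub_mul, mul_smul_comm, smul_mul_assoc, mul_assoc, hb_ext px, pq, add_mul]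
      simp only [mul_sub, mul_one, one_mul]; module)
    rw [this]
    simp [mul_assoc, qB]
  by_cases hc : c = 0
  · subst hc
    have hB : B = 1 := by simpa using hBK
    subst hB
    simp only [zero_smul, sub_zero, one_mul, add_zero, mul_zero, mul_one, mul_neg, neg_mul,
      qx, yx, yq, pq, px, py]
    refine ⟨?_, ?_, ?_, ?_, ?_, ?_⟩ <;> abel
  have xBq : x * (B * q) = c⁻¹ • (B - 1) := by
    have : c • (x * (B * q)) = B - 1 := by
      rw [← qB, ← mul_assoc, ← smul_mul_assoc]
      rw [sub_mul, one_mul] at hKB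
      rw [← hKB]; abel
    rw [← this, smul_smul, inv_mul_cancel₀ hc, one_smul]
  have xBBq : x * (B * (B * q)) = c⁻¹ • (B * B - B) := by
    rw [hb_ext Bx.symm, mul_assoc, xBq, mul_smul_comm, mul_sub, mul_one]
  have xBq' : ∀ z, x * (B * (q * z)) = c⁻¹ • (B - 1) * z := by
    intro z; rw [← xBq]; simp only [mul_assoc]
  have xBBq' : ∀ z, x * (B * (B * (q * z))) = c⁻¹ • (B * B - B) * z := by
    intro z; rw [← xBBq]; simp only [mul_assoc]
  intro Ap1 Ap2 At1 At2
  refine ⟨?_, ?_, ?_, ?_, ?_, ?_⟩ <;> simp only [Ap1, Ap2, At1, At2] <;>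
  simp only [mul_add, add_mul, mul_sub, sub_mul, smul_mul_assoc, mul_smul_comm, mul_assoc,
    mul_neg, neg_mul, one_mul, mul_one, smul_add, smul_sub, smul_neg, smul_smul,
    qx, yx, yq, pq, px, py, Bx, qB, yB, pB, hb_ext qx, hb_ext yx, hb_ext yq, hb_ext pq,
    hb_ext px, hb_ext py, hb_ext Bx, hb_ext qB, hb_ext yB, hb_ext pB, xBq, xBBq, xBq', xBBq'] <;>
  match_scalars <;> field_simp <;> ring

/-- Aizawa's bosonic realization satisfies the GL_h(2)-covariant h-bosonic algebra:
with `B` a two-sided inverse of `K = 1 − (h/2) J₊` the operators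
`A⁺₁ = B ∘ a⁺₁`, `A⁺₂ = K ∘ a⁺₂ + (h/2)(A⁺₁ − 2 a⁺₁ ∘ J₀)`,
`Ã₁ = B ∘ a₂`, `Ã₂ = −K ∘ a₁ + (h/2)(Ã₁ − 2 a₂ ∘ J₀)`
satisfy `[A⁺₁,A⁺₂] = h (A⁺₁)²`, `[Ã₁,Ã₂] = h Ã₁²`, `[Ã₁,A⁺₁] = 0`,
`[Ã₂,A⁺₂] = h(1 − A⁺₁Ã₂ + A⁺₂Ã₁ + h A⁺₁Ã₁)`, and
`[Ã₁,A⁺₂] = −[Ã₂,A⁺₁] = 1 + h A⁺₁Ã₁`. -/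
theorem aizawa_realization_h_bosonic (h : ℝ)
    (B : Module.End ℝ (MvPolynomial (Fin 2) ℝ))
    (hBK : B * K h = 1) (hKB : K h * B = 1) :
    let Ap1 := B * aplus 0
    let Ap2 := K h * aplus 1 + (h / 2) • (Ap1 - (2 : ℝ) • (aplus 0 * Jzero))
    let At1 := B * aop 1
    let At2 := -(K h * aop 0) + (h / 2) • (At1 - (2 : ℝ) • (aop 1 * Jzero))
    Ap1 * Ap2 - Ap2 * Ap1 = h • (Ap1 * Ap1) ∧
    At1 * At2 - At2 * At1 = h • (At1 * At1) ∧
    At1 * Ap1 - Ap1 * At1 = 0 ∧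
    At2 * Ap2 - Ap2 * At2 = h • (1 - Ap1 * At2 + Ap2 * At1 + h • (Ap1 * At1)) ∧
    At1 * Ap2 - Ap2 * At1 = 1 + h • (Ap1 * At1) ∧
    -(At2 * Ap1 - Ap1 * At2) = 1 + h • (Ap1 * At1) := by
  have qx : aop 1 * aplus 0 = aplus 0 * aop 1 := by
    apply LinearMap.ext; intro f
    simp [aop, aplus, MvPolynomial.pderiv_X]
  have yx : aplus 1 * aplus 0 = aplus 0 * aplus 1 := by
    apply LinearMap.ext; intro f
    simp [aplus]; ring
  have yq : aplus 1 * aop 1 = aop 1 * aplus 1 - 1 := by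
    apply LinearMap.ext; intro f
    simp [aop, aplus, MvPolynomial.pderiv_X]
  have pq : aop 0 * aop 1 = aop 1 * aop 0 := by
    have key : ⁅(MvPolynomial.pderiv 0 : Derivation ℝ (MvPolynomial (Fin 2) ℝ) (MvPolynomial (Fin 2) ℝ)),
        (MvPolynomial.pderiv 1 : Derivation ℝ (MvPolynomial (Fin 2) ℝ) (MvPolynomial (Fin 2) ℝ))⁆ = 0 := by
      apply MvPolynomial.derivation_ext
      intro i
      fin_cases i <;> simp [Derivation.commutator_apply, MvPolynomial.pderiv_X]
    apply LinearMap.ext; intro f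
    have := congrArg (fun D : Derivation ℝ (MvPolynomial (Fin 2) ℝ) (MvPolynomial (Fin 2) ℝ) => D f) key
    simp only [Derivation.commutator_apply, Derivation.coe_zero, Pi.zero_apply] at this
    exact sub_eq_zero.mp this
  have px : aop 0 * aplus 0 = aplus 0 * aop 0 + 1 := by
    apply LinearMap.ext; intro f
    simp [aop, aplus, MvPolynomial.pderiv_X]
  have py : aop 0 * aplus 1 = aplus 1 * aop 0 := by
    apply LinearMap.ext; intro f
    simp [aop, aplus, MvPolynomial.pderiv_X]
  have main := hb_abs (h / 2) (aplus 0) (aplus 1) (aop 0) (aop 1) B qx yx yq pq px py hBK hKB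
  have hh : 2 * (h / 2) = h := by ring
  rw [hh] at main
  exact main
end
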